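/- A class H in Pic_r is semi-standard if and only if it can be written as an orthogonal sum H = A + n_1F_1 + ⋯ + n_sF_s (the case s = 0 allowed), where A is a standard class, each n_i is a positive integer, F_1, …, F_s are pairwise orthogonal exceptional classes, and A·F_i = 0 for all i. -/

import Mathlib

open Finset

/-- The intersection form on `Pic_r = ℤ^{r+1}`: the symmetric bilinear form with
`E_0·E_0 = 1`, `E_i·E_i = -1` for `1 ≤ i ≤ r`, and `E_i·E_j = 0` for `i ≠ j`. -/
def inter {r : ℕ} (x y : Fin (r + 1) → ℤ) : ℤ :=
  2 * (x 0 * y 0) - ∑ i, x i * y i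

/-- The standard basis class `E_i` of `Pic_r`. -/
def Eb (r : ℕ) (i : Fin (r + 1)) : Fin (r + 1) → ℤ :=
  fun j => if j = i then 1 else 0

/-- The canonical class `K = -3E_0 + E_1 + ⋯ + E_r`. -/
def Kc (r : ℕ) : Fin (r + 1) → ℤ :=
  fun j => if j = 0 then -3 else 1

/-- The roots `r_0 = E_0 - E_1 - E_2 - E_3` and `r_i = E_i - E_{i+1}` for `1 ≤ i ≤ r-1`. -/
def root (r : ℕ) (i : Fin r) : Fin (r + 1) → ℤ :=
  if (i : ℕ) = 0 then Eb r 0 - Eb r 1 - Eb r 2 - Eb r 3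
  else Eb r i.castSucc - Eb r i.succ

/-- The reflection `σ_v(x) = x + (x·v) v` in the root `v`. -/
def reflect {r : ℕ} (v x : Fin (r + 1) → ℤ) : Fin (r + 1) → ℤ :=
  x + inter x v • v

/-- Membership in the Weyl group `W_r`: the group of transformations of `Pic_r`
generated by the reflections `σ_i(x) = x + (x·r_i) r_i`, `0 ≤ i ≤ r-1` (since each
generator is an involution, the submonoid generated coincides with the subgroup
generated). -/
def InWeyl (r : ℕ) (f : (Fin (r + 1) → ℤ) → (Fin (r + 1) → ℤ)) : Prop :=
  f ∈ Submonoid.closure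
    { g : Function.End (Fin (r + 1) → ℤ) | ∃ i : Fin r, g = reflect (root r i) }

/-- `H = dE_0 - m_1E_1 - ⋯ - m_rE_r` (so `d = H 0`, `m_i = -H i`) is E-standard:
`d ≥ m_1 ≥ ⋯ ≥ m_r ≥ 0`, `d ≥ m_1 + m_2` and `d ≥ m_1 + m_2 + m_3`. -/
def EStandard (r : ℕ) (H : Fin (r + 1) → ℤ) : Prop :=
  -H 1 ≤ H 0 ∧
  (∀ i j : Fin (r + 1), 1 ≤ (i : ℕ) → i ≤ j → -H j ≤ -H i) ∧
  0 ≤ -H (Fin.last r) ∧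
  -H 1 + -H 2 ≤ H 0 ∧
  -H 1 + -H 2 + -H 3 ≤ H 0

/-- `H = dE_0 - m_1E_1 - ⋯ - m_rE_r` is E-semi-standard: `d ≥ 0`,
`d ≥ m_1 ≥ ⋯ ≥ m_r` and `d ≥ m_1 + m_2 + m_3` (the `m_i` may be negative). -/
def ESemiStandard (r : ℕ) (H : Fin (r + 1) → ℤ) : Prop :=
  0 ≤ H 0 ∧
  -H 1 ≤ H 0 ∧
  (∀ i j : Fin (r + 1), 1 ≤ (i : ℕ) → i ≤ j → -H j ≤ -H i) ∧
  -H 1 + -H 2 + -H 3 ≤ H 0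

/-- A class is standard if its image under some element of `W_r` is E-standard. -/
def Standard (r : ℕ) (H : Fin (r + 1) → ℤ) : Prop :=
  ∃ f, InWeyl r f ∧ EStandard r (f H)

/-- A class is semi-standard if its image under some element of `W_r` is
E-semi-standard. -/
def SemiStandard (r : ℕ) (H : Fin (r + 1) → ℤ) : Prop :=
  ∃ f, InWeyl r f ∧ ESemiStandard r (f H)

/-- An exceptional class: an element of the `W_r`-orbit of `E_r`. -/
def Exceptional (r : ℕ) (x : Fin (r + 1) → ℤ) : Prop :=
  ∃ f, InWeyl r f ∧ x = f (Eb r (Fin.last r))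

/-- A line class: an element of the `W_r`-orbit of `E_0`. -/
def LineClass (r : ℕ) (x : Fin (r + 1) → ℤ) : Prop :=
  ∃ f, InWeyl r f ∧ x = f (Eb r 0)

/-- A pencil class: an element of the `W_r`-orbit of `E_0 - E_1`. -/
def PencilClass (r : ℕ) (x : Fin (r + 1) → ℤ) : Prop :=
  ∃ f, InWeyl r f ∧ x = f (Eb r 0 - Eb r 1)

/-- The elliptic generating class `C_i = 3E_0 - E_1 - ⋯ - E_i`. -/
def Cc (r : ℕ) (i : Fin (r + 1)) : Fin (r + 1) → ℤ :=
  fun j => if j = 0 then 3 else if j ≤ i then -1 else 0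

/-- The Euler characteristic `χ(H) = 1 + (H·H - H·K)/2`. -/
def chi (r : ℕ) (H : Fin (r + 1) → ℤ) : ℤ :=
  1 + (inter H H - inter H (Kc r)) / 2


theorem inter_comm' {r : ℕ} (x y : Fin (r + 1) → ℤ) : inter x y = inter y x := by
  simp only [inter, mul_comm]

theorem inter_add_left' {r : ℕ} (x y z : Fin (r + 1) → ℤ) :
    inter (x + y) z = inter x z + inter y z := by
  simp only [inter, Pi.add_apply, add_mul, Finset.sum_add_distrib]; ring

theorem inter_smul_left' {r : ℕ} (c : ℤ) (x z : Fin (r + 1) → ℤ) :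
    inter (c • x) z = c * inter x z := by
  simp only [inter, Pi.smul_apply, smul_eq_mul, mul_assoc, ← Finset.mul_sum]; ring

theorem inter_add_right' {r : ℕ} (x y z : Fin (r + 1) → ℤ) :
    inter z (x + y) = inter z x + inter z y := by
  rw [inter_comm', inter_add_left', inter_comm' x, inter_comm' y]

theorem inter_smul_right' {r : ℕ} (c : ℤ) (x z : Fin (r + 1) → ℤ) :
    inter z (c • x) = c * inter z x := by
  rw [inter_comm', inter_smul_left', inter_comm' x]

theorem inter_sub_right' {r : ℕ} (x y z : Fin (r + 1) → ℤ) :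
    inter z (x - y) = inter z x - inter z y := by
  have : x - y = x + (-1 : ℤ) • y := by simp [sub_eq_add_neg]
  rw [this, inter_add_right', inter_smul_right']; ring

theorem inter_Eb {r : ℕ} (x : Fin (r + 1) → ℤ) (i : Fin (r + 1)) :
    inter x (Eb r i) = if i = 0 then x 0 else -x i := by
  simp only [inter, Eb, mul_ite, mul_one, mul_zero, Finset.sum_ite_eq', Finset.mem_univ, if_true]
  by_cases h : i = 0
  · subst h; simp; ring
  · rw [if_neg h, if_neg (fun h' => h h'.symm)]; ring

theorem inter_sum_left {r : ℕ} {ι : Type*} (s : Finset ι) (f : ι → Fin (r + 1) → ℤ)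
    (z : Fin (r + 1) → ℤ) : inter (∑ i ∈ s, f i) z = ∑ i ∈ s, inter (f i) z := by
  classical
  induction s using Finset.induction_on with
  | empty => simp [inter]
  | insert a s ha ih => rw [Finset.sum_insert ha, Finset.sum_insert ha, inter_add_left', ih]

theorem v1 (k : ℕ) : ((1 : Fin (k + 3 + 1)) : ℕ) = 1 := rfl
theorem v2 (k : ℕ) : ((2 : Fin (k + 3 + 1)) : ℕ) = 2 :=
  Nat.mod_eq_of_lt (show 2 < k + 3 + 1 by omega)

theorem v3 (k : ℕ) : ((3 : Fin (k + 3 + 1)) : ℕ) = 3 :=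
  Nat.mod_eq_of_lt (show 3 < k + 3 + 1 by omega)


theorem inter_root {k : ℕ} (x : Fin (k + 3 + 1) → ℤ) (i : Fin (k + 3)) :
    inter x (root (k + 3) i) =
      if (i : ℕ) = 0 then x 0 + x 1 + x 2 + x 3 else -x i.castSucc + x i.succ := by
  unfold root
  have h1 : (1 : Fin (k + 3 + 1)) ≠ 0 := by simp
  have h2 : (2 : Fin (k + 3 + 1)) ≠ 0 := by rw [Ne, Fin.ext_iff, v2, Fin.val_zero]; omega
  have h3 : (3 : Fin (k + 3 + 1)) ≠ 0 := by rw [Ne, Fin.ext_iff, v3, Fin.val_zero]; omega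
  split_ifs with h
  · rw [inter_sub_right', inter_sub_right', inter_sub_right']
    simp only [inter_Eb, if_pos, if_neg h1, if_neg h2, if_neg h3]; ring
  · have h4 : i.castSucc ≠ 0 := by simp [Fin.ext_iff, h]
    rw [inter_sub_right', inter_Eb, inter_Eb, if_neg h4, if_neg (Fin.succ_ne_zero i)]; ring

theorem root_self (k : ℕ) (i : Fin (k + 3)) :
    inter (root (k + 3) i) (root (k + 3) i) = -2 := by
  rw [inter_root]
  split_ifs with h
  · simp only [root, h, Eb, Fin.ext_iff, v1, v2, v3, if_true, Pi.sub_apply, Fin.val_zero]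
    norm_num
  · simp [root, h, Eb, Fin.ext_iff]

theorem root_ne (k : ℕ) (i j : Fin (k + 3)) (hij : i ≠ j) :
    inter (root (k + 3) i) (root (k + 3) j) = 0 ∨
    inter (root (k + 3) i) (root (k + 3) j) = 1 := by
  rw [inter_root]
  have hij' : (i : ℕ) ≠ j := fun h => hij (Fin.ext h)
  by_cases hj : (j : ℕ) = 0 <;> by_cases hi : (i : ℕ) = 0
  · omega
  · simp only [root, hj, hi, Eb, Fin.ext_iff, v1, v2, v3, if_true, if_false, Pi.sub_apply,
      Fin.val_castSucc, Fin.val_succ, Fin.val_zero]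
    split_ifs <;> first | contradiction | omega
  · simp only [root, hj, hi, Eb, Fin.ext_iff, v1, v2, v3, if_true, if_false, Pi.sub_apply,
      Fin.val_castSucc, Fin.val_succ, Fin.val_zero]
    split_ifs <;> first | contradiction | omega
  · simp only [root, hj, hi, Eb, Fin.ext_iff, v1, v2, v3, if_true, if_false, Pi.sub_apply,
      Fin.val_castSucc, Fin.val_succ, Fin.val_zero]
    split_ifs <;> first | contradiction | omega

theorem reflect_reflect {r : ℕ} (v x : Fin (r + 1) → ℤ) (h : inter v v = -2) :
    reflect v (reflect v x) = x := by
  unfold reflect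
  funext j
  simp only [inter_add_left', inter_smul_left', h, Pi.add_apply, Pi.smul_apply, smul_eq_mul]
  ring

theorem reflect_comm {r : ℕ} (v w x : Fin (r + 1) → ℤ) (h : inter v w = 0) :
    reflect v (reflect w x) = reflect w (reflect v x) := by
  have h' : inter w v = 0 := by rw [inter_comm', h]
  unfold reflect
  funext j
  simp only [inter_add_left', inter_smul_left', h, h', Pi.add_apply, Pi.smul_apply, smul_eq_mul]
  ring

theorem reflect_braid {r : ℕ} (v w x : Fin (r + 1) → ℤ) (hv : inter v v = -2)
    (hw : inter w w = -2) (h : inter v w = 1) :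
    reflect v (reflect w (reflect v x)) = reflect w (reflect v (reflect w x)) := by
  have h' : inter w v = 1 := by rw [inter_comm', h]
  unfold reflect
  funext j
  simp only [inter_add_left', inter_smul_left', h, h', hv, hw, Pi.add_apply, Pi.smul_apply,
    smul_eq_mul]
  ring

theorem reflect_inter {r : ℕ} (v x y : Fin (r + 1) → ℤ) :
    inter (reflect v x) y = inter x (reflect v y) := by
  unfold reflect
  rw [inter_add_left', inter_smul_left', inter_add_right', inter_smul_right', inter_comm' y v]
  ring

theorem reflect_add {r : ℕ} (v x y : Fin (r + 1) → ℤ) :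
    reflect v (x + y) = reflect v x + reflect v y := by
  unfold reflect
  rw [inter_add_left', add_smul]; abel

theorem reflect_smul {r : ℕ} (v x : Fin (r + 1) → ℤ) (c : ℤ) :
    reflect v (c • x) = c • reflect v x := by
  unfold reflect
  rw [inter_smul_left', smul_add, smul_smul]

/-- The action of a word in the simple reflections. -/
def act (r : ℕ) : List (Fin r) → (Fin (r + 1) → ℤ) → (Fin (r + 1) → ℤ)
  | [], x => x
  | t :: l, x => act r l (reflect (root r t) x)

theorem act_add (r : ℕ) (l : List (Fin r)) (x y : Fin (r + 1) → ℤ) :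
    act r l (x + y) = act r l x + act r l y := by
  induction l generalizing x y with
  | nil => rfl
  | cons t l ih => simp only [act, reflect_add, ih]

theorem act_smul (r : ℕ) (l : List (Fin r)) (c : ℤ) (x : Fin (r + 1) → ℤ) :
    act r l (c • x) = c • act r l x := by
  induction l generalizing x with
  | nil => rfl
  | cons t l ih => simp only [act, reflect_smul, ih]

theorem act_append (r : ℕ) (l m : List (Fin r)) (x : Fin (r + 1) → ℤ) :
    act r (l ++ m) x = act r m (act r l x) := by
  induction l generalizing x with
  | nil => rfl
  | cons t l ih => simp only [act, List.cons_append, ih]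

theorem act_sum (r : ℕ) (l : List (Fin r)) {ι : Type*} (s : Finset ι)
    (f : ι → Fin (r + 1) → ℤ) : act r l (∑ i ∈ s, f i) = ∑ i ∈ s, act r l (f i) := by
  classical
  induction s using Finset.induction_on with
  | empty =>
    have := act_smul r l 0 0
    simpa using this
  | insert a s ha ih => rw [Finset.sum_insert ha, Finset.sum_insert ha, act_add, ih]

theorem act_inter (r : ℕ) (l : List (Fin r)) (x y : Fin (r + 1) → ℤ) :
    inter (act r l x) y = inter x (act r l.reverse y) := by
  induction l generalizing x with
  | nil => rfl
  | cons t l ih =>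
    simp only [act, ih, reflect_inter, List.reverse_cons, act_append]

theorem act_reverse (k : ℕ) (l : List (Fin (k + 3))) (x : Fin (k + 3 + 1) → ℤ) :
    act (k + 3) l.reverse (act (k + 3) l x) = x := by
  induction l generalizing x with
  | nil => rfl
  | cons t l ih =>
    simp only [act, List.reverse_cons, act_append, ih, reflect_reflect _ _ (root_self k t)]

theorem act_reverse' (k : ℕ) (l : List (Fin (k + 3))) (x : Fin (k + 3 + 1) → ℤ) :
    act (k + 3) l (act (k + 3) l.reverse x) = x := by
  have := act_reverse k l.reverse x
  rwa [List.reverse_reverse] at this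

theorem act_isom (k : ℕ) (l : List (Fin (k + 3))) (x y : Fin (k + 3 + 1) → ℤ) :
    inter (act (k + 3) l x) (act (k + 3) l y) = inter x y := by
  rw [act_inter, act_reverse]

theorem inWeyl_iff (r : ℕ) (f : (Fin (r + 1) → ℤ) → (Fin (r + 1) → ℤ)) :
    InWeyl r f ↔ ∃ l, f = act r l := by
  constructor
  · intro h
    unfold InWeyl at h
    refine Submonoid.closure_induction_right
      (motive := fun (g : Function.End (Fin (r + 1) → ℤ)) _ => ∃ l, g = act r l) ?_ ?_ h
    · exact ⟨[], rfl⟩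
    · rintro x hx y ⟨i, rfl⟩ ⟨l, rfl⟩
      exact ⟨i :: l, rfl⟩
  · rintro ⟨l, rfl⟩
    induction l with
    | nil => exact Submonoid.one_mem (M := Function.End (Fin (r + 1) → ℤ)) _
    | cons t l ih =>
      exact Submonoid.mul_mem (M := Function.End (Fin (r + 1) → ℤ)) _ ih
        (Submonoid.subset_closure (M := Function.End (Fin (r + 1) → ℤ)) ⟨t, rfl⟩)

/-- Key lemma: right descent or positivity against a dominant class. -/
theorem key (k : ℕ) (D : Fin (k + 3 + 1) → ℤ) (hD : ∀ i, 0 ≤ inter D (root (k + 3) i)) :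
    ∀ (n : ℕ) (l : List (Fin (k + 3))), l.length ≤ n → ∀ s,
      0 ≤ inter D (act (k + 3) l (root (k + 3) s)) ∨
      ∃ l' : List (Fin (k + 3)), l'.length < l.length ∧
        ∀ x, act (k + 3) l' x = act (k + 3) l (reflect (root (k + 3) s) x) := by
  intro n
  induction n with
  | zero =>
    intro l hl s
    have : l = [] := List.length_eq_zero_iff.mp (by omega)
    subst this
    exact Or.inl (hD s)
  | succ n ih =>
    intro l hl s
    cases l with
    | nil => exact Or.inl (hD s)
    | cons t l =>
      simp only [List.length_cons] at hl ⊢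
      by_cases hst : s = t
      · subst hst
        refine Or.inr ⟨l, by omega, fun x => ?_⟩
        simp only [act, reflect_reflect _ _ (root_self k s)]
      rcases ih l (by omega) t with ht | ⟨l1, h1, e1⟩
      swap
      · rcases ih l1 (by omega) s with h | ⟨l2, h2, e2⟩
        · left
          rw [e1] at h
          exact h
        · refine Or.inr ⟨l2, by omega, fun x => ?_⟩
          rw [e2, e1]; rfl
      have hss := root_self k s
      have htt := root_self k t
      rcases root_ne k s t hst with h0 | h0
      · have e : reflect (root (k + 3) t) (root (k + 3) s) = root (k + 3) s := by
          simp [reflect, h0]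
        rcases ih l (by omega) s with h | ⟨l1, h1, e1⟩
        · left; simp only [act, e]; exact h
        · refine Or.inr ⟨t :: l1, by simp; omega, fun x => ?_⟩
          simp only [act, e1]
          rw [reflect_comm _ _ _ h0]
      · have e : reflect (root (k + 3) t) (root (k + 3) s) = root (k + 3) s + root (k + 3) t := by
          simp [reflect, h0]
        rcases ih l (by omega) s with h | ⟨l1, h1, e1⟩
        · left; simp only [act, e, act_add, inter_add_right']; omega
        · rcases ih l1 (by omega) t with h | ⟨l2, h2, e2⟩
          · left
            rw [e1] at h
            have e' : reflect (root (k + 3) s) (root (k + 3) t)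
                = root (k + 3) s + root (k + 3) t := by
              simp [reflect, inter_comm' _ (root (k + 3) s), h0, add_comm]
            simp only [act, e]; rw [← e']; exact h
          · refine Or.inr ⟨t :: s :: l2, by simp; omega, fun x => ?_⟩
            simp only [act, e2, e1]
            rw [reflect_braid _ _ _ hss htt h0, reflect_reflect _ _ htt]

theorem dom_le (k : ℕ) (D x : Fin (k + 3 + 1) → ℤ) (hD : ∀ i, 0 ≤ inter D (root (k + 3) i))
    (hx : ∀ i, 0 ≤ inter x (root (k + 3) i)) :
    ∀ (n : ℕ) (l : List (Fin (k + 3))), l.length ≤ n → inter D x ≤ inter D (act (k + 3) l x) := by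
  intro n
  induction n with
  | zero =>
    intro l hl
    have : l = [] := List.length_eq_zero_iff.mp (by omega)
    subst this
    exact le_rfl
  | succ n ih =>
    intro l hl
    cases l with
    | nil => exact le_rfl
    | cons t l =>
      simp only [List.length_cons] at hl
      rcases key k D hD l.length l le_rfl t with h | ⟨l1, h1, e1⟩
      · have := ih l (by omega)
        simp only [act]
        unfold reflect
        rw [act_add, act_smul, inter_add_right', inter_smul_right']
        have := mul_nonneg (hx t) h
        omega
      · have := ih l1 (by omega)
        rwa [e1] at this

theorem semi_dom (k : ℕ) (D : Fin (k + 3 + 1) → ℤ) (h : ESemiStandard (k + 3) D)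
    (i : Fin (k + 3)) : 0 ≤ inter D (root (k + 3) i) := by
  obtain ⟨h0, h1, h2, h3⟩ := h
  rw [inter_root]
  split_ifs with hi
  · omega
  · have := h2 i.castSucc i.succ (by simp; omega) (Fin.castSucc_lt_succ).le
    omega

theorem semi_of_std (k : ℕ) (D : Fin (k + 3 + 1) → ℤ) (h : EStandard (k + 3) D) :
    ESemiStandard (k + 3) D := by
  obtain ⟨h0, h1, h2, h3, h4⟩ := h
  refine ⟨?_, h0, h1, h4⟩
  have := h1 1 (Fin.last _) (by simp) (Fin.le_last _)
  omega

theorem semi_E0 (k : ℕ) : ESemiStandard (k + 3) (Eb (k + 3) 0) := by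
  refine ⟨?_, ?_, ?_, ?_⟩
  · simp [Eb]
  · simp [Eb]
  · intro i j hi hij
    have hij' : (i : ℕ) ≤ j := hij
    simp only [Eb, Fin.ext_iff, Fin.val_zero]
    split_ifs <;> first | contradiction | omega
  · simp only [Eb, Fin.ext_iff, Fin.val_zero, v1, v2, v3]
    norm_num

theorem semi_E01 (k : ℕ) : ESemiStandard (k + 3) (Eb (k + 3) 0 - Eb (k + 3) 1) := by
  refine ⟨?_, ?_, ?_, ?_⟩
  · simp [Eb]
  · simp [Eb]
  · intro i j hi hij
    have hij' : (i : ℕ) ≤ j := hij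
    simp only [Eb, Fin.ext_iff, Fin.val_zero, v1, Pi.sub_apply]
    split_ifs <;> first | contradiction | omega
  · simp only [Eb, Fin.ext_iff, Fin.val_zero, v1, v2, v3, Pi.sub_apply]
    norm_num

theorem semi_Er (k : ℕ) : ESemiStandard (k + 3) (Eb (k + 3) (Fin.last (k + 3))) := by
  refine ⟨?_, ?_, ?_, ?_⟩
  · simp only [Eb, Fin.ext_iff, Fin.val_zero, Fin.val_last]
    split_ifs <;> first | contradiction | omega
  · simp only [Eb, Fin.ext_iff, Fin.val_zero, v1, Fin.val_last]
    split_ifs <;> first | contradiction | omega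
  · intro i j hi hij
    have hij' : (i : ℕ) ≤ j := hij
    have := j.isLt
    simp only [Eb, Fin.ext_iff, Fin.val_last]
    split_ifs <;> first | contradiction | omega
  · simp only [Eb, Fin.ext_iff, Fin.val_zero, v1, v2, v3, Fin.val_last]
    split_ifs <;> first | contradiction | omega

/-- Nonnegative against all line classes and pencil classes. -/
def Good (k : ℕ) (y : Fin (k + 3 + 1) → ℤ) : Prop :=
  ∀ l, 0 ≤ inter y (act (k + 3) l (Eb (k + 3) 0)) ∧
    0 ≤ inter y (act (k + 3) l (Eb (k + 3) 0 - Eb (k + 3) 1))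

theorem one_ne (k : ℕ) : (1 : Fin (k + 3 + 1)) ≠ 0 := by simp

theorem inter_E01 {k : ℕ} (x : Fin (k + 3 + 1) → ℤ) :
    inter x (Eb (k + 3) 0 - Eb (k + 3) 1) = x 0 + x 1 := by
  rw [inter_sub_right', inter_Eb, inter_Eb, if_pos rfl, if_neg (one_ne k)]; ring

theorem good_semi (k : ℕ) (D : Fin (k + 3 + 1) → ℤ) (h : ESemiStandard (k + 3) D) :
    Good k D := by
  intro l
  have hD := semi_dom k D h
  have h1 := dom_le k D _ hD (semi_dom k _ (semi_E0 k)) _ l le_rfl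
  have h2 := dom_le k D _ hD (semi_dom k _ (semi_E01 k)) _ l le_rfl
  rw [inter_Eb, if_pos rfl] at h1
  rw [inter_E01] at h2
  obtain ⟨h3, h4, -, -⟩ := h
  exact ⟨by omega, by omega⟩

theorem good_act (k : ℕ) (y : Fin (k + 3 + 1) → ℤ) (h : Good k y) (l : List (Fin (k + 3))) :
    Good k (act (k + 3) l y) := by
  intro l'
  rw [act_inter, act_inter, ← act_append, ← act_append]
  exact h _

theorem good_of_act (k : ℕ) (y : Fin (k + 3 + 1) → ℤ) (l : List (Fin (k + 3)))
    (h : Good k (act (k + 3) l y)) : Good k y := by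
  have := good_act k _ h l.reverse
  rwa [act_reverse] at this

theorem perm_act (k : ℕ) (σ : Equiv.Perm (Fin (k + 3))) :
    ∃ l, ∀ H, act (k + 3) l H 0 = H 0 ∧ ∀ i : Fin (k + 3),
      act (k + 3) l H i.succ = H (σ i).succ := by
  have hσ : σ ∈ Submonoid.closure
      (Set.range fun i : Fin (k + 2) ↦ Equiv.swap i.castSucc i.succ) := by
    rw [Equiv.Perm.mclosure_swap_castSucc_succ]; trivial
  induction hσ using Submonoid.closure_induction_left with
  | one => exact ⟨[], fun H => ⟨rfl, fun i => rfl⟩⟩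
  | mul_left x hx y hy ih =>
    obtain ⟨j, rfl⟩ := hx
    obtain ⟨l, hl⟩ := ih
    refine ⟨j.succ :: l, fun H => ⟨?_, fun i => ?_⟩⟩
    · simp only [act]
      rw [(hl _).1]
      simp only [reflect, root, Eb, Fin.ext_iff, Pi.add_apply, Pi.smul_apply, Pi.sub_apply,
        Fin.val_succ, Fin.val_castSucc, Fin.val_zero, Nat.add_eq_zero_iff, one_ne_zero, and_false,
        if_false, smul_eq_mul]
      rw [if_neg (by omega), if_neg (by omega)]
      ring
    · simp only [act]
      rw [(hl _).2, Equiv.Perm.mul_apply]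
      generalize y i = a
      have hc : j.succ.castSucc = j.castSucc.succ := rfl
      simp only [reflect, Pi.add_apply, Pi.smul_apply, smul_eq_mul]
      rw [inter_root, if_neg (by simp)]
      simp only [root, Fin.val_succ, Nat.add_eq_zero_iff, one_ne_zero, and_false, if_false,
        Pi.sub_apply, Eb, hc, Fin.succ_inj, Equiv.swap_apply_def]
      by_cases h1 : a = j.castSucc
      · subst h1
        have : j.castSucc ≠ j.succ := (Fin.castSucc_lt_succ).ne
        simp [this]
      · by_cases h2 : a = j.succ
        · subst h2
          simp [h1]
        · simp [h1, h2]

theorem exc_E (k : ℕ) (i : Fin (k + 3 + 1)) (hi : i ≠ 0) :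
    Exceptional (k + 3) (Eb (k + 3) i) := by
  obtain ⟨i, rfl⟩ := Fin.exists_succ_eq.mpr hi
  obtain ⟨l, hl⟩ := perm_act k (Equiv.swap i (Fin.last (k + 2)))
  refine ⟨act (k + 3) l, (inWeyl_iff _ _).mpr ⟨l, rfl⟩, ?_⟩
  funext j
  refine Fin.cases ?_ (fun j => ?_) j
  · rw [(hl _).1]
    simp only [Eb, Fin.ext_iff, Fin.val_succ, Fin.val_last, Fin.val_zero]
    rw [if_neg (by omega), if_neg (by omega)]
  · rw [(hl _).2]
    have e : (Fin.last (k + 3)) = (Fin.last (k + 2)).succ := rfl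
    simp only [Eb, e, Fin.succ_inj]
    have : (Equiv.swap i (Fin.last (k + 2))) j = Fin.last (k + 2) ↔ j = i := by
      rw [Equiv.swap_apply_eq_iff, Equiv.swap_apply_right]
    simp only [this]

theorem exc_act (k : ℕ) (x : Fin (k + 3 + 1) → ℤ) (h : Exceptional (k + 3) x)
    (l : List (Fin (k + 3))) : Exceptional (k + 3) (act (k + 3) l x) := by
  obtain ⟨f, hf, rfl⟩ := h
  obtain ⟨m, rfl⟩ := (inWeyl_iff _ _).mp hf
  exact ⟨act (k + 3) (m ++ l), (inWeyl_iff _ _).mpr ⟨_, rfl⟩, (act_append _ _ _ _).symm⟩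

theorem exc_line (k : ℕ) :
    Exceptional (k + 3) (Eb (k + 3) 0 - Eb (k + 3) 1 - Eb (k + 3) 2) := by
  have h3 : (3 : Fin (k + 3 + 1)) ≠ 0 := by rw [Ne, Fin.ext_iff, v3, Fin.val_zero]; omega
  have := exc_act k _ (exc_E k 3 h3) [0]
  convert this using 1
  simp only [act, reflect]
  rw [inter_root, if_pos (by simp)]
  have e : root (k + 3) 0 = Eb (k + 3) 0 - Eb (k + 3) 1 - Eb (k + 3) 2 - Eb (k + 3) 3 := by
    simp [root]
  have e2 : Eb (k + 3) 3 0 + Eb (k + 3) 3 1 + Eb (k + 3) 3 2 + Eb (k + 3) 3 3 = 1 := by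
    simp only [Eb, Fin.ext_iff, Fin.val_zero, v1, v2, v3]
    norm_num
  rw [e, e2]; simp

theorem good_semiStd (k : ℕ) (H : Fin (k + 3 + 1) → ℤ) (h : Good k H) :
    SemiStandard (k + 3) H := by
  have hnn : ∀ l, 0 ≤ act (k + 3) l H 0 := by
    intro l
    have := (good_act k H h l []).1
    simpa [act, inter_Eb] using this
  have hex : ∃ n : ℕ, ∃ l, act (k + 3) l H 0 = n :=
    ⟨(act (k + 3) [] H 0).toNat, [], (Int.toNat_of_nonneg (hnn [])).symm⟩
  classical
  obtain ⟨l, hl⟩ := Nat.find_spec hex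
  have hmin : ∀ l', act (k + 3) l H 0 ≤ act (k + 3) l' H 0 := by
    intro l'
    rw [hl]
    have := Nat.find_min' hex ⟨l', (Int.toNat_of_nonneg (hnn l')).symm⟩
    have h2 := Int.toNat_of_nonneg (hnn l')
    omega
  obtain ⟨m, hm⟩ := perm_act k (Tuple.sort (fun i : Fin (k + 3) => act (k + 3) l H i.succ))
  have hmono := Tuple.monotone_sort (fun i : Fin (k + 3) => act (k + 3) l H i.succ)
  have hm' := hm (act (k + 3) l H)
  rw [← act_append] at hm'
  refine ⟨act (k + 3) (l ++ m), (inWeyl_iff _ _).mpr ⟨_, rfl⟩, hnn _, ?_, ?_, ?_⟩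
  · have := (good_act k H h (l ++ m) []).2
    simp only [act, inter_E01] at this
    omega
  · intro i j hi hij
    have hi0 : i ≠ 0 := by rintro rfl; simp at hi
    have hj0 : j ≠ 0 := by
      rintro rfl
      exact hi0 (le_antisymm hij (Fin.zero_le _))
    obtain ⟨i, rfl⟩ := Fin.exists_succ_eq.mpr hi0
    obtain ⟨j, rfl⟩ := Fin.exists_succ_eq.mpr hj0
    rw [hm'.2, hm'.2]
    have := hmono (Fin.succ_le_succ_iff.mp hij)
    simp only [Function.comp_apply] at this
    omega
  · have h1 := hmin ((l ++ m) ++ [0])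
    rw [act_append _ (l ++ m)] at h1
    rw [← hm'.1] at h1
    generalize act (k + 3) (l ++ m) H = y at h1 ⊢
    simp only [act, reflect, Pi.add_apply, Pi.smul_apply, smul_eq_mul] at h1
    rw [inter_root, if_pos (by simp)] at h1
    have e : root (k + 3) 0 0 = 1 := by
      have e' : root (k + 3) 0 = Eb (k + 3) 0 - Eb (k + 3) 1 - Eb (k + 3) 2 - Eb (k + 3) 3 := by
        simp [root]
      rw [e']
      simp only [Eb, Fin.ext_iff, Fin.val_zero, v1, v2, v3, Pi.sub_apply]
      norm_num
    rw [e] at h1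
    omega

theorem good_dec (k : ℕ) (A : Fin (k + 3 + 1) → ℤ) (s : ℕ) (n : Fin s → ℤ)
    (F : Fin s → (Fin (k + 3 + 1) → ℤ)) (hA : Standard (k + 3) A) (hn : ∀ i, 0 < n i)
    (hF : ∀ i, Exceptional (k + 3) (F i)) : Good k (A + ∑ i, n i • F i) := by
  have gA : Good k A := by
    obtain ⟨f, hf, hA⟩ := hA
    obtain ⟨l, rfl⟩ := (inWeyl_iff _ _).mp hf
    exact good_of_act k A l (good_semi k _ (semi_of_std k _ hA))
  have gF : ∀ i, Good k (F i) := by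
    intro i
    obtain ⟨f, hf, e⟩ := hF i
    obtain ⟨l, rfl⟩ := (inWeyl_iff _ _).mp hf
    rw [e]
    exact good_act k _ (good_semi k _ (semi_Er k)) l
  intro l
  simp only [inter_add_left', inter_sum_left, inter_smul_left']
  exact ⟨add_nonneg (gA l).1 (Finset.sum_nonneg fun i _ => mul_nonneg (hn i).le (gF i l).1),
    add_nonneg (gA l).2 (Finset.sum_nonneg fun i _ => mul_nonneg (hn i).le (gF i l).2)⟩

/-- The decomposition property. -/
def Dec (k : ℕ) (H : Fin (k + 3 + 1) → ℤ) : Prop :=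
  ∃ (A : Fin (k + 3 + 1) → ℤ) (s : ℕ) (n : Fin s → ℤ)
        (F : Fin s → (Fin (k + 3 + 1) → ℤ)),
        Standard (k + 3) A ∧
        (∀ i, 0 < n i) ∧
        (∀ i, Exceptional (k + 3) (F i)) ∧
        (∀ i j, i ≠ j → inter (F i) (F j) = 0) ∧
        (∀ i, inter A (F i) = 0) ∧
        H = A + ∑ i, n i • F i

theorem dec_act (k : ℕ) (H : Fin (k + 3 + 1) → ℤ) (h : Dec k H) (l : List (Fin (k + 3))) :
    Dec k (act (k + 3) l H) := by
  obtain ⟨A, s, n, F, ⟨f, hf, hA⟩, hn, hF, hFF, hAF, rfl⟩ := h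
  obtain ⟨m, rfl⟩ := (inWeyl_iff _ _).mp hf
  refine ⟨act (k + 3) l A, s, n, fun i => act (k + 3) l (F i),
    ⟨act (k + 3) (l.reverse ++ m), (inWeyl_iff _ _).mpr ⟨_, rfl⟩, ?_⟩, hn,
    fun i => exc_act k _ (hF i) l, fun i j hij => ?_, fun i => ?_, ?_⟩
  · rw [act_append, act_reverse]; exact hA
  · rw [act_isom]; exact hFF i j hij
  · rw [act_isom]; exact hAF i
  · simp only [act_add, act_sum, act_smul]

theorem dec_of_fun (k : ℕ) (H A : Fin (k + 3 + 1) → ℤ) {ι : Type} [Fintype ι] (n : ι → ℤ)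
    (F : ι → (Fin (k + 3 + 1) → ℤ)) (hA : EStandard (k + 3) A) (hn : ∀ i, 0 ≤ n i)
    (hF : ∀ i, 0 < n i → Exceptional (k + 3) (F i))
    (hFF : ∀ i j, 0 < n i → 0 < n j → i ≠ j → inter (F i) (F j) = 0)
    (hAF : ∀ i, 0 < n i → inter A (F i) = 0) (hH : H = A + ∑ i, n i • F i) : Dec k H := by
  classical
  let e := Fintype.equivFin {i : ι // 0 < n i}
  refine ⟨A, _, fun i => n (e.symm i), fun i => F (e.symm i),
    ⟨act (k + 3) [], (inWeyl_iff _ _).mpr ⟨_, rfl⟩, hA⟩, fun i => (e.symm i).2,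
    fun i => hF _ (e.symm i).2, fun i j hij => hFF _ _ (e.symm i).2 (e.symm j).2 ?_,
    fun i => hAF _ (e.symm i).2, ?_⟩
  · intro h
    exact hij (e.symm.injective (Subtype.ext h))
  · rw [hH, Equiv.sum_comp e.symm (fun i => n i • F i)]
    congr 1
    rw [← Finset.sum_subtype (Finset.univ.filter fun i => 0 < n i) (by simp) (fun i => n i • F i)]
    rw [Finset.sum_filter]
    refine Finset.sum_congr rfl fun i _ => ?_
    split_ifs with hi
    · rfl
    · have : n i = 0 := le_antisymm (not_lt.mp hi) (hn i)
      simp [this]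

theorem semi_dec (k : ℕ) (H : Fin (k + 3 + 1) → ℤ) (h : ESemiStandard (k + 3) H) :
    Dec k H := by
  obtain ⟨h0, h1, h2, h3⟩ := h
  have hEE : ∀ i j : Fin (k + 3 + 1), i ≠ j → j ≠ 0 → inter (Eb (k + 3) i) (Eb (k + 3) j) = 0 := by
    intro i j hij hj
    rw [inter_Eb, if_neg hj]
    simp [Eb, hij.symm]
  have h12 := h2 1 2 (by simp) (by rw [Fin.le_def, v1, v2]; omega)
  have h23 := h2 2 3 (by rw [v2]; omega) (by rw [Fin.le_def, v2, v3]; omega)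
  have ne20 : (2 : Fin (k + 3 + 1)) ≠ 0 := by rw [Ne, Fin.ext_iff, v2, Fin.val_zero]; omega
  have ne21 : (2 : Fin (k + 3 + 1)) ≠ 1 := by rw [Ne, Fin.ext_iff, v2, v1]; omega
  have ne10 := one_ne k
  have ne30 : (3 : Fin (k + 3 + 1)) ≠ 0 := by rw [Ne, Fin.ext_iff, v3, Fin.val_zero]; omega
  have ne31 : (3 : Fin (k + 3 + 1)) ≠ 1 := by rw [Ne, Fin.ext_iff, v3, v1]; omega
  have ne32 : (3 : Fin (k + 3 + 1)) ≠ 2 := by rw [Ne, Fin.ext_iff, v3, v2]; omega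
  by_cases hc : -H 1 + -H 2 ≤ H 0
  · refine dec_of_fun k H (fun j => if j = 0 then H 0 else min (H j) 0)
      (fun j => if j = 0 then 0 else max (H j) 0) (fun j => Eb (k + 3) j) ?_ ?_ ?_ ?_ ?_ ?_
    · refine ⟨?_, ?_, ?_, ?_, ?_⟩
      · simp only [if_true, if_neg ne10]; omega
      · intro i j hi hij
        have hi0 : i ≠ 0 := by rintro rfl; simp at hi
        have hj0 : j ≠ 0 := by
          rintro rfl
          exact hi0 (le_antisymm hij (Fin.zero_le _))
        have := h2 i j hi hij
        simp only [if_neg hi0, if_neg hj0]; omega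
      · have : Fin.last (k + 3) ≠ 0 := by simp [Fin.ext_iff]
        simp only [if_neg this]; omega
      · simp only [if_true, if_neg ne10, if_neg ne20]; omega
      · simp only [if_true, if_neg ne10, if_neg ne20, if_neg ne30]; omega
    · intro i; split_ifs <;> first | contradiction | omega
    · intro i hi
      by_cases hi0 : i = 0
      · simp [hi0] at hi
      · exact exc_E k i hi0
    · intro i j hi hj hij
      by_cases hj0 : j = 0
      · simp [hj0] at hj
      · exact hEE i j hij hj0
    · intro i hi
      by_cases hi0 : i = 0
      · simp [hi0] at hi
      · simp only [if_neg hi0] at hi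
        rw [inter_Eb, if_neg hi0]
        simp only [if_neg hi0]; omega
    · funext j
      simp only [Pi.add_apply, Finset.sum_apply, Pi.smul_apply, Eb, smul_eq_mul, mul_ite, mul_one,
        mul_zero, Finset.sum_ite_eq, Finset.mem_univ, if_true]
      split_ifs with hj
      · subst hj; simp
      · omega
  · -- the line through the first two points is a fixed component
    have hge : ∀ j : Fin (k + 3 + 1), 3 ≤ (j : ℕ) → -H 1 + -H 2 - H 0 ≤ H j := by
      intro j hj
      have := h2 3 j (by rw [v3]; omega) (by rw [Fin.le_def, v3]; omega)
      omega
    have hL : ∀ j : Fin (k + 3 + 1), (Eb (k + 3) 0 - Eb (k + 3) 1 - Eb (k + 3) 2) j =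
        if (j : ℕ) = 0 then 1 else if (j : ℕ) ≤ 2 then -1 else 0 := by
      intro j
      simp only [Pi.sub_apply, Eb, Fin.ext_iff, Fin.val_zero, v1, v2]
      split_ifs <;> first | contradiction | omega
    have hAL : ∀ x : Fin (k + 3 + 1) → ℤ, inter x (Eb (k + 3) 0 - Eb (k + 3) 1 - Eb (k + 3) 2)
        = x 0 + x 1 + x 2 := by
      intro x
      rw [inter_sub_right', inter_E01, inter_Eb, if_neg ne20]; ring
    have hLE : ∀ j : Fin (k + 3 + 1), 3 ≤ (j : ℕ) →
        inter (Eb (k + 3) 0 - Eb (k + 3) 1 - Eb (k + 3) 2) (Eb (k + 3) j) = 0 := by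
      intro j hj
      have hj0 : j ≠ 0 := by rw [Ne, Fin.ext_iff, Fin.val_zero]; omega
      rw [inter_Eb, if_neg hj0, hL, if_neg (by omega), if_neg (by omega), neg_zero]
    refine dec_of_fun k H (fun j : Fin (k + 3 + 1) => if (j : ℕ) = 0 then 2 * H 0 + H 1 + H 2 else
        if (j : ℕ) = 1 then -(H 0 + H 2) else if (j : ℕ) = 2 then -(H 0 + H 1) else 0)
      (fun j : Fin (k + 3 + 1) => if (j : ℕ) = 0 then -H 1 - H 2 - H 0 else if (j : ℕ) ≤ 2 then 0 else H j)
      (fun j : Fin (k + 3 + 1) => if (j : ℕ) = 0 then Eb (k + 3) 0 - Eb (k + 3) 1 - Eb (k + 3) 2 else Eb (k + 3) j)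
      ?_ ?_ ?_ ?_ ?_ ?_
    · refine ⟨?_, ?_, ?_, ?_, ?_⟩
      · simp only [Fin.val_zero, v1]; norm_num; omega
      · intro i j hi hij
        have hij' : (i : ℕ) ≤ j := hij
        try dsimp only
        split_ifs <;> first | contradiction | omega
      · dsimp only
        rw [Fin.val_last]
        split_ifs <;> first | contradiction | omega
      · simp only [Fin.val_zero, v1, v2]; norm_num; omega
      · simp only [Fin.val_zero, v1, v2, v3]; norm_num; omega
    · intro i
      have := hge i
      try dsimp only
      split_ifs <;> first | contradiction | omega
    · intro i hi
      try dsimp only at hi ⊢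
      split_ifs with hi0
      · exact exc_line k
      · exact exc_E k i (fun h => hi0 (by rw [h]; rfl))
    · intro i j hi hj hij
      have hij' : (i : ℕ) ≠ j := fun h => hij (Fin.ext h)
      try dsimp only at hi hj ⊢
      by_cases hi0 : (i : ℕ) = 0 <;> by_cases hj0 : (j : ℕ) = 0
      · omega
      · rw [if_pos hi0, if_neg hj0]
        rw [if_neg hj0] at hj
        exact hLE j (by split_ifs at hj <;> omega)
      · rw [if_pos hj0, if_neg hi0, inter_comm']
        rw [if_neg hi0] at hi
        exact hLE i (by split_ifs at hi <;> omega)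
      · rw [if_neg hi0, if_neg hj0]
        exact hEE i j hij (fun h => hj0 (by rw [h]; rfl))
    · intro i hi
      try dsimp only at hi
      by_cases hi0 : (i : ℕ) = 0
      · rw [if_pos hi0, hAL]
        simp only [Fin.val_zero, v1, v2]; norm_num; ring
      · rw [if_neg hi0, inter_Eb, if_neg (fun h => hi0 (by rw [h]; rfl))]
        rw [if_neg hi0] at hi
        split_ifs at hi ⊢ <;> omega
    · funext j
      rw [Fin.sum_univ_succ]
      simp only [Pi.add_apply, Finset.sum_apply, Pi.smul_apply, smul_eq_mul, Fin.val_zero, if_true,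
        Fin.val_succ, Nat.add_eq_zero_iff, one_ne_zero, and_false, if_false]
      rw [hL]
      refine Fin.cases ?_ (fun j => ?_) j
      · have e0 : ∀ i : Fin (k + 3), (0 : Fin (k + 3 + 1)) ≠ i.succ :=
          fun i => (Fin.succ_ne_zero i).symm
        simp only [Eb, if_neg (e0 _), mul_zero, Finset.sum_const_zero, Fin.val_zero, if_true]
        ring
      · simp only [Eb, Fin.succ_inj, mul_ite, mul_one, mul_zero, Finset.sum_ite_eq,
          Finset.mem_univ, if_true, Fin.val_succ]
        have e1 : (j : ℕ) = 0 → H j.succ = H 1 := fun h => congrArg H (Fin.ext (by simp [h]))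
        have e2 : (j : ℕ) = 1 → H j.succ = H 2 :=
          fun h => congrArg H (Fin.ext (by rw [v2, Fin.val_succ, h]))
        split_ifs <;> first | contradiction | omega

/-- A class `H` in `Pic_r` is semi-standard if and only if it can be written as an
orthogonal sum `H = A + n_1F_1 + ⋯ + n_sF_s` (`s = 0` allowed), where `A` is
standard, each `n_i > 0`, the `F_i` are pairwise orthogonal exceptional classes and
`A·F_i = 0` for all `i`. -/
theorem semistandard_iff_orthogonal_decomposition (r : ℕ) (hr : 3 ≤ r)
    (H : Fin (r + 1) → ℤ) :
    SemiStandard r H ↔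
      ∃ (A : Fin (r + 1) → ℤ) (s : ℕ) (n : Fin s → ℤ)
        (F : Fin s → (Fin (r + 1) → ℤ)),
        Standard r A ∧
        (∀ i, 0 < n i) ∧
        (∀ i, Exceptional r (F i)) ∧
        (∀ i j, i ≠ j → inter (F i) (F j) = 0) ∧
        (∀ i, inter A (F i) = 0) ∧
        H = A + ∑ i, n i • F i := by
  obtain ⟨k, rfl⟩ : ∃ k, r = k + 3 := ⟨r - 3, by omega⟩
  constructor
  · rintro ⟨f, hf, hH⟩
    obtain ⟨l, rfl⟩ := (inWeyl_iff _ _).mp hf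
    have := dec_act k _ (semi_dec k _ hH) l.reverse
    rw [act_reverse] at this
    exact this
  · rintro ⟨A, s, n, F, hA, hn, hF, -, -, rfl⟩
    exact good_semiStd k _ (good_dec k A s n F hA hn hF)
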